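/- Let G be a branch group acting on a rooted tree T. Then for each vertex v of T the rigid stabilizer rist_G(v) is not virtually soluble. -/

import Mathlib

/-!  Common definitions: rooted trees of type `(m n)`, tree automorphisms,
rigid stabilizers, branch groups, and auxiliary notions. -/

universe u

/-- Vertices of the rooted tree of type `m`: finite sequences `(x_0, …, x_{n-1})`
with `x_i ∈ {1, …, m i}` (encoded as `Fin (m i)`). -/
def Vertex (m : ℕ → ℕ) : Type := Σ n : ℕ, ∀ i : Fin n, Fin (m i)

namespace Vertex

variable {m : ℕ → ℕ}

/-- The level of a vertex: its length. -/
def level (v : Vertex m) : ℕ := v.1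

/-- `v` is a (weak) prefix of `w`; i.e. `w` lies in the subtree `T_v`
(`w = v` or `w` is a descendant of `v`). -/
def IsPrefix (v w : Vertex m) : Prop :=
  ∃ h : v.1 ≤ w.1, ∀ i : Fin v.1, w.2 (Fin.castLE h i) = v.2 i

/-- `w` is a child (one-step extension) of `v`. -/
def IsChild (v w : Vertex m) : Prop := w.1 = v.1 + 1 ∧ IsPrefix v w

end Vertex

/-- The `n`-th layer `L_n` of the tree: all vertices of level `n`. -/
def layer (m : ℕ → ℕ) (n : ℕ) : Set (Vertex m) := {v | v.1 = n}

section Rist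

variable {m : ℕ → ℕ} (G : Type*) [Group G] [MulAction G (Vertex m)]

/-- The rigid stabilizer of a vertex `v`: all elements fixing every vertex
outside the subtree `T_v`. -/
def rist (v : Vertex m) : Subgroup G :=
  ⨅ w ∈ {w : Vertex m | ¬ Vertex.IsPrefix v w}, MulAction.stabilizer G w

/-- The subgroup generated by the rigid stabilizers of the vertices in `X`. -/
def ristSet (X : Set (Vertex m)) : Subgroup G := ⨆ v ∈ X, rist G v

/-- `rist_G(n)`, the rigid stabilizer of the `n`-th layer. -/
def ristLayer (m : ℕ → ℕ) (G : Type*) [Group G] [MulAction G (Vertex m)] (n : ℕ) :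
    Subgroup G :=
  ristSet G (layer m n)

/-- The orbit of the vertex `v` under a subgroup `H ≤ G`. -/
def subOrbit (H : Subgroup G) (v : Vertex m) : Set (Vertex m) :=
  {w | ∃ h ∈ H, h • v = w}

/-- The set of orbits of a subgroup `H ≤ G` on a set `X` of vertices. -/
def orbitsOn (H : Subgroup G) (X : Set (Vertex m)) : Set (Set (Vertex m)) :=
  (fun v => subOrbit G H v) '' X

end Rist

/-- `G` is a branch group on the rooted tree of type `m` (with respect to the given
action): the action is faithful and by tree automorphisms, `G` acts transitively on
each layer, and each `rist_G(n)` has finite index in `G`. -/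
structure IsBranchGroup (m : ℕ → ℕ) (G : Type*) [Group G] [MulAction G (Vertex m)] :
    Prop where
  faithful : ∀ g : G, (∀ v : Vertex m, g • v = v) → g = 1
  aut : ∀ (g : G) (v w : Vertex m), Vertex.IsChild v w ↔ Vertex.IsChild (g • v) (g • w)
  trans : ∀ v w : Vertex m, v.1 = w.1 → ∃ g : G, g • v = w
  ristFiniteIndex : ∀ n : ℕ, (ristLayer m G n).FiniteIndex

/-- A group is virtually soluble if it has a soluble subgroup of finite index. -/
def VirtuallySolvable (Γ : Type*) [Group Γ] : Prop :=
  ∃ S : Subgroup Γ, S.FiniteIndex ∧ IsSolvable ↥S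

/-- A group is virtually abelian if it has an abelian subgroup of finite index. -/
def VirtuallyAbelian (Γ : Type*) [Group Γ] : Prop :=
  ∃ S : Subgroup Γ, S.FiniteIndex ∧ ∀ a ∈ S, ∀ b ∈ S, a * b = b * a

/-- For subgroups `A ≤ B` of a group with `A` normalised by `B`, this says that the
factor `B/A` belongs to the class `𝔛`. -/
def FactorIn (𝔛 : (Γ : Type u) → [inst : Group Γ] → Prop) {G : Type u} [Group G]
    (A B : Subgroup G) : Prop :=
  ∃ hn : (A.subgroupOf B).Normal, letI := hn; 𝔛 (↥B ⧸ A.subgroupOf B)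

/-- The factor `B/A` is virtually soluble. -/
def FactorVirtuallySolvable {G : Type*} [Group G] (A B : Subgroup G) : Prop :=
  ∃ hn : (A.subgroupOf B).Normal,
    letI := hn; VirtuallySolvable (↥B ⧸ A.subgroupOf B)

/-- The factor `B/A` is virtually abelian. -/
def FactorVirtuallyAbelian {G : Type*} [Group G] (A B : Subgroup G) : Prop :=
  ∃ hn : (A.subgroupOf B).Normal,
    letI := hn; VirtuallyAbelian (↥B ⧸ A.subgroupOf B)

/-- `Γ` has `r` infinite normal subgroups that generate their direct product in `Γ`:
each of them intersects trivially the subgroup generated by the others. -/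
def HasIndepFamily (Γ : Type*) [Group Γ] (r : ℕ) : Prop :=
  ∃ N : Fin r → Subgroup Γ, (∀ i, (N i).Normal) ∧ (∀ i, Infinite ↥(N i)) ∧
    ∀ i, N i ⊓ (⨆ j ∈ ({i}ᶜ : Set (Fin r)), N j) = ⊥

/-!
The rigid stabilizers form a family of nontrivial subgroups in which each nontrivial element `g` of
a member `R` pushes some smaller member `Q ≤ R` off itself: `Q` and `gQg⁻¹` commute and intersect
trivially. This property alone forces every member to be infinite and, passing to `S ∩ Q`, makes
each finite-index subgroup `S` of a member nonabelian. If now `N` is an abelian normal subgroup of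
`S` containing some `g ≠ 1`, then for `a, b ∈ S ∩ Q` the identity `⁅⁅a, g⁆, b⁆ = ⁅a, b⁆` puts
`⁅a, b⁆` in `N`, so `g` centralizes `⁅a, b⁆ ∈ Q`, which forces `⁅a, b⁆ = 1`. Thus `S ∩ Q` would be
abelian, a contradiction. Hence `S` has no nontrivial abelian normal subgroup and
cannot be soluble.
-/

section GroupTheory

variable {G : Type*} [Group G]

theorem subsingleton_of_isSolvable_of_forall_normal_commute [hG : Group.IsSolvable G]
    (h : ∀ N : Subgroup G, N.Normal → (∀ a ∈ N, ∀ b ∈ N, Commute a b) → N = ⊥) :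
    Subsingleton G := by
  have descend (k : ℕ) : derivedSeries G k = ⊥ → (⊤ : Subgroup G) = ⊥ := by
    induction k with
    | zero => exact id
    | succ k ih =>
      intro hk
      refine ih (h _ (derivedSeries_normal G k) fun a ha b hb => ?_)
      rw [← commutatorElement_eq_one_iff_commute, ← Subgroup.mem_bot, ← hk]
      exact Subgroup.commutator_mem_commutator ha hb
  obtain ⟨k, hk⟩ := hG.solvable
  exact Subgroup.subsingleton_iff.mp (subsingleton_of_bot_eq_top (descend k hk).symm)

theorem exists_mem_inf_ne_one_of_relIndex_ne_zero {S R : Subgroup G} [Infinite R]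
    (hS : S.relIndex R ≠ 0) : ∃ a ∈ S ⊓ R, a ≠ 1 := by
  refine (S ⊓ R).bot_or_exists_ne_one.resolve_left fun hbot => hS ?_
  rw [← Subgroup.inf_relIndex_right, hbot, Subgroup.relIndex_bot_left,
    Nat.card_eq_zero_of_infinite]

end GroupTheory

section Displacement

open scoped commutatorElement

variable {G : Type*} [Group G]

/-- An element `g` displaces a subgroup `Q` if `Q` and `gQg⁻¹` generate their direct product: they
intersect trivially and commute with each other. -/
structure Displaces (g : G) (Q : Subgroup G) : Prop where
  disjoint_map_conj : Disjoint Q (Q.map (MulAut.conj g).toMonoidHom)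
  commute_conj : ∀ a ∈ Q, ∀ b ∈ Q, Commute (MulAut.conj g a) b

namespace Displaces

variable {g : G} {Q : Subgroup G}

theorem eq_one_of_conj_mem (h : Displaces g Q) {a : G} (ha : a ∈ Q) (hga : MulAut.conj g a ∈ Q) :
    a = 1 :=
  (map_eq_one_iff _ (MulAut.conj g).injective).mp <|
    Subgroup.disjoint_def.mp h.disjoint_map_conj hga (Subgroup.mem_map_of_mem _ ha)

theorem eq_one_of_commute (h : Displaces g Q) {a : G} (ha : a ∈ Q) (hga : Commute g a) : a = 1 := by
  refine h.eq_one_of_conj_mem ha ?_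
  rwa [MulAut.conj_apply, hga.mul_inv_cancel]

theorem ne_of_mem (h : Displaces g Q) (hQ : Q ≠ ⊥) {R : Subgroup G} (hg : g ∈ R) : Q ≠ R := by
  rintro rfl
  refine hQ ((Subgroup.eq_bot_iff_forall Q).mpr fun a ha => h.eq_one_of_conj_mem ha ?_)
  exact mul_mem (mul_mem hg ha) (inv_mem hg)

theorem commutator_commutator (h : Displaces g Q) {a b : G} (ha : a ∈ Q) (hb : b ∈ Q) :
    ⁅⁅a, g⁆, b⁆ = ⁅a, b⁆ := by
  have hcb : Commute (MulAut.conj g a⁻¹) b := h.commute_conj _ (inv_mem ha) _ hb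
  have hac : ⁅a, g⁆ = a * MulAut.conj g a⁻¹ := by
    rw [commutatorElement_def, MulAut.conj_apply]; group
  rw [hac, commutatorElement_mul_left_eq_conj_mul, commutatorElement_eq_one_iff_commute.mpr hcb,
    mul_one, mul_inv_cancel, one_mul]

end Displaces

/-- A family of nontrivial subgroups such that each nontrivial element of a member displaces some
smaller member. It abstracts the rigid stabilizers of a weakly branch action. -/
structure IsDisplacingFamily {ι : Type*} (R : ι → Subgroup G) : Prop where
  ne_bot : ∀ i, R i ≠ ⊥
  exists_displaces : ∀ i, ∀ g ∈ R i, g ≠ 1 → ∃ j, R j ≤ R i ∧ Displaces g (R j)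

namespace IsDisplacingFamily

variable {ι : Type*} {R : ι → Subgroup G}

theorem exists_lt (hR : IsDisplacingFamily R) (i : ι) : ∃ j, R j < R i := by
  obtain ⟨g, hg, hg1⟩ := (R i).bot_or_exists_ne_one.resolve_left (hR.ne_bot i)
  obtain ⟨j, hji, hgj⟩ := hR.exists_displaces i g hg hg1
  exact ⟨j, hji.lt_of_ne (hgj.ne_of_mem (hR.ne_bot j) hg)⟩

theorem infinite (hR : IsDisplacingFamily R) (i : ι) : Infinite (R i) := by
  induction hn : Nat.card (R i) using Nat.strong_induction_on generalizing i with
  | _ n ih =>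
    obtain ⟨j, hji⟩ := hR.exists_lt i
    by_contra hfin
    rw [not_infinite_iff_finite] at hfin
    have hcard : Nat.card (R j) < n := hn ▸ Set.ncard_lt_ncard (SetLike.coe_ssubset_coe.mpr hji)
    have hinf : Infinite (R j) := ih _ hcard j rfl
    exact Set.infinite_coe_iff.mp hinf ((R i : Set G).toFinite.subset hji.le)

variable {i : ι} {S : Subgroup G}

theorem exists_not_commute (hR : IsDisplacingFamily R) (hS : S.relIndex (R i) ≠ 0) :
    ∃ a ∈ S ⊓ R i, ∃ b ∈ S ⊓ R i, ¬ Commute a b := by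
  have hinf := hR.infinite
  obtain ⟨g, ⟨hgS, hgi⟩, hg1⟩ := exists_mem_inf_ne_one_of_relIndex_ne_zero hS
  obtain ⟨j, hji, hgj⟩ := hR.exists_displaces i g hgi hg1
  obtain ⟨a, ⟨haS, haj⟩, ha1⟩ := exists_mem_inf_ne_one_of_relIndex_ne_zero
    (mt (Subgroup.relIndex_eq_zero_of_le_right hji) hS)
  exact ⟨g, ⟨hgS, hgi⟩, a, ⟨haS, hji haj⟩, mt (hgj.eq_one_of_commute haj) ha1⟩

theorem eq_bot_of_le_normalizer_of_commute (hR : IsDisplacingFamily R)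
    (hS : S.relIndex (R i) ≠ 0) {N : Subgroup G} (hNR : N ≤ R i)
    (hSN : S ≤ Subgroup.normalizer N) (hN : ∀ a ∈ N, ∀ b ∈ N, Commute a b) : N = ⊥ := by
  refine (Subgroup.eq_bot_iff_forall N).mpr fun g hg => by_contra fun hg1 => ?_
  obtain ⟨j, hji, hgj⟩ := hR.exists_displaces i g (hNR hg) hg1
  obtain ⟨a, ⟨haS, haj⟩, b, ⟨hbS, hbj⟩, hab⟩ := hR.exists_not_commute
    (mt (Subgroup.relIndex_eq_zero_of_le_right hji) hS)
  have commutator_mem_N {s n : G} (hs : s ∈ S) (hn : n ∈ N) : ⁅s, n⁆ ∈ N :=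
    mul_mem ((Subgroup.mem_normalizer_iff.mp (hSN hs) n).mp hn) (inv_mem hn)
  have hab_N : ⁅a, b⁆ ∈ N := by
    rw [← hgj.commutator_commutator haj hbj, ← commutatorElement_inv]
    exact inv_mem (commutator_mem_N hbS (commutator_mem_N haS hg))
  have hab_Rj : ⁅a, b⁆ ∈ R j :=
    (R j).commutator_le_self (Subgroup.commutator_mem_commutator haj hbj)
  exact hab (commutatorElement_eq_one_iff_commute.mp
    (hgj.eq_one_of_commute hab_Rj (hN g hg _ hab_N)))

theorem not_isSolvable (hR : IsDisplacingFamily R) (hSR : S ≤ R i) (hS : S.relIndex (R i) ≠ 0) :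
    ¬ Group.IsSolvable S := by
  intro hsolv
  have hS_trivial : Subsingleton S := by
    refine subsingleton_of_isSolvable_of_forall_normal_commute fun N hNnormal hN => ?_
    rw [← N.map_eq_bot_iff_of_injective S.subtype_injective]
    refine hR.eq_bot_of_le_normalizer_of_commute hS ((Subgroup.map_subtype_le N).trans hSR) ?_ ?_
    · have hmap := N.le_normalizer_map S.subtype
      rwa [N.normalizer_eq_top, ← MonoidHom.range_eq_map, S.range_subtype] at hmap
    · rintro _ ⟨a, ha, rfl⟩ _ ⟨b, hb, rfl⟩
      exact (hN a ha b hb).map S.subtype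
  have hinf := hR.infinite i
  obtain ⟨a, ⟨haS, -⟩, ha1⟩ := exists_mem_inf_ne_one_of_relIndex_ne_zero hS
  exact ha1 (congrArg Subtype.val (Subsingleton.elim (⟨a, haS⟩ : S) 1))

theorem not_virtuallySolvable (hR : IsDisplacingFamily R) (i : ι) :
    ¬ VirtuallySolvable (R i) := by
  rintro ⟨S, hSfin, (hSsolv : Group.IsSolvable S)⟩
  have hrel : (S.map (R i).subtype).relIndex (R i) ≠ 0 := by
    rw [Subgroup.relIndex, Subgroup.subgroupOf,
      Subgroup.comap_map_eq_self_of_injective (R i).subtype_injective]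
    exact hSfin.index_ne_zero
  have e : S ≃* S.map (R i).subtype := S.equivMapOfInjective _ (R i).subtype_injective
  exact hR.not_isSolvable (Subgroup.map_subtype_le S) hrel
    (Group.isSolvable_of_surjective (f := e.toMonoidHom) e.surjective)

end IsDisplacingFamily

end Displacement

section Action

open scoped Pointwise

variable {G X : Type*} [Group G] [MulAction G X] {U V : Set X}

theorem smul_mem_iff_of_mem_fixingSubgroup_compl {a : G} (ha : a ∈ fixingSubgroup G Uᶜ) {x : X} :
    a • x ∈ U ↔ x ∈ U :=
  MulAction.smul_mem_of_set_mem_fixedBy <| MulAction.set_mem_fixedBy_of_movedBy_subset <|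
    (mem_fixingSubgroup_compl_iff_movedBy_subset G).mp ha

variable [FaithfulSMul G X]

theorem disjoint_fixingSubgroup_compl (h : Disjoint U V) :
    Disjoint (fixingSubgroup G Uᶜ) (fixingSubgroup G Vᶜ) := by
  refine Subgroup.disjoint_def.mpr fun {a} haU haV => ?_
  refine eq_of_smul_eq_smul (α := X) fun x => ?_
  rw [one_smul]
  by_cases hx : x ∈ U
  · exact haV ⟨x, h.notMem_of_mem_left hx⟩
  · exact haU ⟨x, hx⟩

theorem commute_of_mem_fixingSubgroup_compl (h : Disjoint U V) {a b : G}
    (ha : a ∈ fixingSubgroup G Uᶜ) (hb : b ∈ fixingSubgroup G Vᶜ) : Commute a b := by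
  have hfixa := (mem_fixingSubgroup_iff G).mp ha
  have hfixb := (mem_fixingSubgroup_iff G).mp hb
  refine eq_of_smul_eq_smul (α := X) fun x => ?_
  rw [mul_smul, mul_smul]
  by_cases hx : x ∈ U
  · have hax : a • x ∈ U := (smul_mem_iff_of_mem_fixingSubgroup_compl ha).mpr hx
    rw [hfixb x (h.notMem_of_mem_left hx), hfixb _ (h.notMem_of_mem_left hax)]
  · have hbx : b • x ∉ U := fun hbxU => hx <| by
      have hxV := mt (smul_mem_iff_of_mem_fixingSubgroup_compl hb).mpr (h.notMem_of_mem_left hbxU)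
      rwa [hfixb x hxV] at hbxU
    rw [hfixa x hx, hfixa _ hbx]

theorem displaces_fixingSubgroup_compl {g : G} (h : Disjoint U (g • U)) :
    Displaces g (fixingSubgroup G Uᶜ) where
  disjoint_map_conj := by
    rw [← SubMulAction.fixingSubgroup_smul_eq_fixingSubgroup_map_conj, Set.smul_set_compl]
    exact disjoint_fixingSubgroup_compl h
  commute_conj _ ha _ hb :=
    commute_of_mem_fixingSubgroup_compl h.symm
      (Set.conj_mem_fixingSubgroup Set.smul_set_compl ha) hb

end Action

namespace Vertex

variable {m : ℕ → ℕ} {u v w x : Vertex m}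

theorem isPrefix_refl (v : Vertex m) : IsPrefix v v :=
  ⟨le_rfl, fun _ => rfl⟩

theorem IsPrefix.trans (huv : IsPrefix u v) (hvw : IsPrefix v w) : IsPrefix u w :=
  ⟨huv.1.trans hvw.1, fun i => (hvw.2 (Fin.castLE huv.1 i)).trans (huv.2 i)⟩

theorem IsPrefix.eq_of_level_eq (h : IsPrefix v w) (hlevel : v.level = w.level) : v = w := by
  obtain ⟨n, v⟩ := v
  obtain ⟨k, w⟩ := w
  obtain rfl : n = k := hlevel
  exact congrArg (Sigma.mk n) (funext fun i => (h.2 i).symm)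

theorem IsPrefix.of_isPrefix_of_level_le (hv : IsPrefix v x) (hw : IsPrefix w x)
    (hlevel : v.level ≤ w.level) : IsPrefix v w :=
  ⟨hlevel, fun i => (hw.2 (Fin.castLE hlevel i)).symm.trans (hv.2 i)⟩

theorem exists_isChild_of_level_eq_succ (w : Vertex m) {n : ℕ} (hw : w.level = n + 1) :
    ∃ p : Vertex m, p.level = n ∧ IsChild p w :=
  have hle : n ≤ w.1 := n.le_succ.trans_eq hw.symm
  ⟨⟨n, fun i => w.2 (Fin.castLE hle i)⟩, rfl, hw, hle, fun _ => rfl⟩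

theorem isPrefix_iff_reflTransGen_isChild :
    IsPrefix v w ↔ Relation.ReflTransGen IsChild v w := by
  refine ⟨fun h => ?_, fun h => ?_⟩
  · induction hn : w.level generalizing w with
    | zero =>
      obtain rfl := h.eq_of_level_eq (Nat.le_antisymm h.1 (hn.trans_le (Nat.zero_le _)))
      exact .refl
    | succ n ih =>
      obtain hlt | heq := lt_or_eq_of_le (show v.level ≤ w.level from h.1)
      · obtain ⟨p, hp, hpw⟩ := exists_isChild_of_level_eq_succ w hn
        have hvp : IsPrefix v p := h.of_isPrefix_of_level_le hpw.2 (by lia)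
        exact (ih hvp hp).tail hpw
      · obtain rfl := h.eq_of_level_eq heq
        exact .refl
  · induction h with
    | refl => exact isPrefix_refl v
    | tail _ hchild ih => exact ih.trans hchild.2

/-- The vertex set of the subtree `T_v`: `v` together with its descendants. -/
def subtree (v : Vertex m) : Set (Vertex m) := {w | IsPrefix v w}

theorem subtree_subset_subtree (h : IsPrefix v w) : subtree w ⊆ subtree v :=
  fun _ hx => h.trans hx

theorem disjoint_subtree (hlevel : v.level = w.level) (hne : v ≠ w) :
    Disjoint (subtree v) (subtree w) :=
  Set.disjoint_left.mpr fun _ hv hw =>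
    hne ((hv.of_isPrefix_of_level_le hw hlevel.le).eq_of_level_eq hlevel)

end Vertex

section TreeAction

open scoped Pointwise

variable {m : ℕ → ℕ} {G : Type*} [Group G] [MulAction G (Vertex m)]

variable (m G) in
/-- The action of `G` is by automorphisms of the rooted tree. One implication is enough, because
applying it to `g⁻¹` gives the converse. -/
def PreservesChildren : Prop :=
  ∀ (g : G) (v w : Vertex m), Vertex.IsChild v w → Vertex.IsChild (g • v) (g • w)

namespace PreservesChildren

theorem level_le_level_smul (h : PreservesChildren m G) (g : G) (w : Vertex m) :
    w.level ≤ (g • w).level := by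
  induction hn : w.level generalizing w with
  | zero => exact Nat.zero_le _
  | succ n ih =>
    obtain ⟨p, hp, hpw⟩ := w.exists_isChild_of_level_eq_succ hn
    exact (Nat.succ_le_succ (ih p hp)).trans_eq (h g p w hpw).1.symm

theorem level_smul (h : PreservesChildren m G) (g : G) (w : Vertex m) :
    (g • w).level = w.level := by
  refine le_antisymm ?_ (h.level_le_level_smul g w)
  simpa only [inv_smul_smul] using h.level_le_level_smul g⁻¹ (g • w)

theorem isPrefix_smul (h : PreservesChildren m G) (g : G) {v w : Vertex m}
    (hvw : Vertex.IsPrefix v w) : Vertex.IsPrefix (g • v) (g • w) :=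
  Vertex.isPrefix_iff_reflTransGen_isChild.mpr <|
    (Vertex.isPrefix_iff_reflTransGen_isChild.mp hvw).lift (g • ·) (h g)

theorem smul_subtree (h : PreservesChildren m G) (g : G) (v : Vertex m) :
    g • v.subtree = (g • v).subtree := by
  ext w
  rw [Set.mem_smul_set_iff_inv_smul_mem]
  refine ⟨fun hw => ?_, fun hw => ?_⟩
  · have hgw : Vertex.IsPrefix (g • v) (g • g⁻¹ • w) := h.isPrefix_smul g hw
    rwa [smul_inv_smul] at hgw
  · have hgv : Vertex.IsPrefix (g⁻¹ • g • v) (g⁻¹ • w) := h.isPrefix_smul g⁻¹ hw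
    rwa [inv_smul_smul] at hgv

end PreservesChildren

variable (G) in
theorem rist_eq_fixingSubgroup (v : Vertex m) : rist G v = fixingSubgroup G v.subtreeᶜ := by
  ext g
  simp only [rist, Subgroup.mem_iInf, mem_fixingSubgroup_iff, MulAction.mem_stabilizer_iff]
  rfl

theorem rist_le_rist_of_isPrefix {v w : Vertex m} (h : Vertex.IsPrefix v w) :
    rist G w ≤ rist G v := by
  rw [rist_eq_fixingSubgroup, rist_eq_fixingSubgroup]
  exact fixingSubgroup_antitone G _ (Set.compl_subset_compl.mpr (Vertex.subtree_subset_subtree h))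

theorem PreservesChildren.rist_smul (h : PreservesChildren m G) (g : G) (v : Vertex m) :
    rist G (g • v) = (rist G v).map (MulAut.conj g).toMonoidHom := by
  rw [rist_eq_fixingSubgroup, rist_eq_fixingSubgroup, ← h.smul_subtree, ← Set.smul_set_compl,
    SubMulAction.fixingSubgroup_smul_eq_fixingSubgroup_map_conj]

theorem PreservesChildren.isDisplacingFamily_rist [FaithfulSMul G (Vertex m)]
    (h : PreservesChildren m G) (hrist : ∀ v : Vertex m, rist G v ≠ ⊥) :
    IsDisplacingFamily fun v : Vertex m => rist G v where
  ne_bot := hrist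
  exists_displaces v g hg hg1 := by
    obtain ⟨w, hw⟩ : ∃ w : Vertex m, g • w ≠ w := by
      by_contra! hfix
      exact hg1 (eq_of_smul_eq_smul (α := Vertex m) fun w => by rw [hfix, one_smul])
    rw [rist_eq_fixingSubgroup, mem_fixingSubgroup_iff] at hg
    have hvw : Vertex.IsPrefix v w := by_contra fun hvw => hw (hg w hvw)
    refine ⟨w, rist_le_rist_of_isPrefix hvw, ?_⟩
    rw [rist_eq_fixingSubgroup]
    apply displaces_fixingSubgroup_compl
    rw [h.smul_subtree]
    exact Vertex.disjoint_subtree (h.level_smul g w).symm hw.symm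

theorem infinite_of_transitive_on_layers (hm : ∀ n, 2 ≤ m n)
    (htrans : ∀ v w : Vertex m, v.1 = w.1 → ∃ g : G, g • v = w) : Infinite G := by
  by_contra hfin
  rw [not_infinite_iff_finite] at hfin
  let n := Nat.card G
  let v₀ : Vertex m := ⟨n, fun i => ⟨0, by have := hm i; lia⟩⟩
  choose g hg using fun x : ∀ i : Fin n, Fin (m i) => htrans v₀ ⟨n, x⟩ rfl
  have hg_inj : Function.Injective g := fun x y hxy =>
    sigma_mk_injective ((hg x).symm.trans (hxy ▸ hg y))
  have hcard : 2 ^ n ≤ Nat.card (∀ i : Fin n, Fin (m i)) := by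
    simpa [Nat.card_pi] using
      Finset.univ.pow_card_le_prod (fun i : Fin n => m i) 2 fun i _ => hm i
  have hle : 2 ^ n ≤ n := hcard.trans (Nat.card_le_card_of_injective g hg_inj)
  exact hle.not_gt Nat.lt_two_pow_self

namespace IsBranchGroup

theorem faithfulSMul (hG : IsBranchGroup m G) : FaithfulSMul G (Vertex m) where
  eq_of_smul_eq_smul {g h} hgh := by
    refine inv_mul_eq_one.mp (hG.faithful _ fun v => ?_) |>.symm
    rw [mul_smul, hgh, inv_smul_smul]

theorem preservesChildren (hG : IsBranchGroup m G) : PreservesChildren m G :=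
  fun g v w => (hG.aut g v w).mp

theorem rist_ne_bot (hm : ∀ n, 2 ≤ m n) (hG : IsBranchGroup m G) (v : Vertex m) :
    rist G v ≠ ⊥ := by
  intro hv
  have hlayer : ristLayer m G v.level = ⊥ := by
    refine iSup₂_eq_bot.mpr fun w hw => ?_
    obtain ⟨g, rfl⟩ := hG.trans v w hw.symm
    rw [hG.preservesChildren.rist_smul, hv, Subgroup.map_bot]
  have hindex := (hG.ristFiniteIndex v.level).index_ne_zero
  have := infinite_of_transitive_on_layers hm hG.trans
  rw [hlayer, Subgroup.index_bot] at hindex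
  exact hindex Nat.card_eq_zero_of_infinite

end IsBranchGroup

end TreeAction

theorem rist_not_virtually_solvable_general
    {m : ℕ → ℕ} {G : Type*} [Group G] [MulAction G (Vertex m)] [FaithfulSMul G (Vertex m)]
    (haut : PreservesChildren m G) (hrist : ∀ v : Vertex m, rist G v ≠ ⊥) (v : Vertex m) :
    ¬ VirtuallySolvable (rist G v) :=
  (haut.isDisplacingFamily_rist hrist).not_virtuallySolvable v

/-- **Lemma.** If `G` is a branch group on `T`, then for every vertex `v` the rigid
stabilizer `rist_G(v)` is not virtually soluble. -/
theorem rist_not_virtually_solvable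
    (m : ℕ → ℕ) (hm : ∀ n, 2 ≤ m n)
    (G : Type*) [Group G] [MulAction G (Vertex m)] (hG : IsBranchGroup m G)
    (v : Vertex m) :
    ¬ VirtuallySolvable ↥(rist G v) := by
  have := hG.faithfulSMul
  exact rist_not_virtually_solvable_general hG.preservesChildren (hG.rist_ne_bot hm) v
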